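/- Let X be a Tychonoff topological space and let 𝔅 be a bornology with compact base on X. Then C_𝔅(X) satisfies the selection principle S₁(Ω_{0̄}, Ω_{0̄}) if and only if X satisfies the selection principle S₁(𝒪_𝔅, 𝒪_𝔅). -/

import Mathlib

open Set Topology

universe u

/-- A bornology on `X`: a collection of subsets covering `X`, closed under
taking subsets and under finite unions. -/
structure IsBornology {X : Type*} (𝔅 : Set (Set X)) : Prop where
  covers : ⋃₀ 𝔅 = Set.univ
  empty_mem : ∅ ∈ 𝔅
  subset_mem : ∀ ⦃A B : Set X⦄, B ∈ 𝔅 → A ⊆ B → A ∈ 𝔅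
  union_mem : ∀ ⦃A B : Set X⦄, A ∈ 𝔅 → B ∈ 𝔅 → A ∪ B ∈ 𝔅

/-- `𝔅` has a compact base: every member of `𝔅` is contained in a compact member of `𝔅`. -/
def HasCompactBase {X : Type*} [TopologicalSpace X] (𝔅 : Set (Set X)) : Prop :=
  ∀ B ∈ 𝔅, ∃ K ∈ 𝔅, IsCompact K ∧ B ⊆ K

/-- The set of continuous real-valued functions on `X` (as a bare type, to be
topologized by a bornology). -/
def CFn (X : Type u) [TopologicalSpace X] : Type u := {f : X → ℝ // Continuous f}

/-- The zero function as an element of `CFn X`. -/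
def zeroFn (X : Type u) [TopologicalSpace X] : CFn X := ⟨fun _ => 0, continuous_const⟩

/-- The basic "ball" `⟨B, ε⟩[f] = {g : ∀ x ∈ B, |f x − g x| < ε}`. -/
def unifBall {X : Type u} [TopologicalSpace X] (f : CFn X) (B : Set X) (ε : ℝ) :
    Set (CFn X) :=
  {g | ∀ x ∈ B, |f.1 x - g.1 x| < ε}

/-- The topology of uniform convergence on members of a bornology `𝔅`:
a set is open iff around each of its points it contains a basic ball
`⟨B, ε⟩[f]` with `B ∈ 𝔅`, `ε > 0`.  This makes `CFn X` into `C_𝔅(X)`. -/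
def bornTopology {X : Type u} [TopologicalSpace X] (𝔅 : Set (Set X))
    (hB : IsBornology 𝔅) : TopologicalSpace (CFn X) where
  IsOpen U := ∀ f ∈ U, ∃ B ∈ 𝔅, ∃ ε > (0 : ℝ), unifBall f B ε ⊆ U
  isOpen_univ := fun f _ => ⟨∅, hB.empty_mem, 1, one_pos, fun _ _ => trivial⟩
  isOpen_inter := by
    intro U V hU hV f hf
    obtain ⟨B₁, hB₁, ε₁, hε₁, h₁⟩ := hU f hf.1
    obtain ⟨B₂, hB₂, ε₂, hε₂, h₂⟩ := hV f hf.2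
    refine ⟨B₁ ∪ B₂, hB.union_mem hB₁ hB₂, min ε₁ ε₂, lt_min hε₁ hε₂, fun g hg => ⟨?_, ?_⟩⟩
    · exact h₁ fun x hx => lt_of_lt_of_le (hg x (Or.inl hx)) (min_le_left _ _)
    · exact h₂ fun x hx => lt_of_lt_of_le (hg x (Or.inr hx)) (min_le_right _ _)
  isOpen_sUnion := by
    intro S hS f hf
    obtain ⟨U, hU, hfU⟩ := hf
    obtain ⟨B, hB', ε, hε, h⟩ := hS U hU f hfU
    exact ⟨B, hB', ε, hε, h.trans (Set.subset_sUnion_of_mem hU)⟩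

/-- `Ω_z`: the family of all subsets of `Z ∖ {z}` having `z` in their closure. -/
def OmegaAt {Z : Type*} [TopologicalSpace Z] (z : Z) : Set (Set Z) :=
  {A | A ⊆ {z}ᶜ ∧ z ∈ closure A}

/-- `𝒢` is a `𝔅`-cover of `X`: every member of `𝔅` is contained in a member of `𝒢`. -/
def IsBCover {X : Type*} (𝔅 : Set (Set X)) (𝒢 : Set (Set X)) : Prop :=
  ∀ B ∈ 𝔅, ∃ G ∈ 𝒢, B ⊆ G

/-- `𝒪_𝔅`: the family of all open `𝔅`-covers of `X`. -/
def OpenBCovers {X : Type*} [TopologicalSpace X] (𝔅 : Set (Set X)) : Set (Set (Set X)) :=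
  {𝒰 | (∀ U ∈ 𝒰, IsOpen U) ∧ IsBCover 𝔅 𝒰}

/-- `𝒢` is a K-cover of `X`: every compact subset of `X` is contained in a member of `𝒢`. -/
def IsKCover {X : Type*} [TopologicalSpace X] (𝒢 : Set (Set X)) : Prop :=
  ∀ K : Set X, IsCompact K → ∃ G ∈ 𝒢, K ⊆ G

/-- `𝒦`: the family of all open K-covers of `X`. -/
def KCovers (X : Type*) [TopologicalSpace X] : Set (Set (Set X)) :=
  {𝒰 | (∀ U ∈ 𝒰, IsOpen U) ∧ IsKCover 𝒰}

/-- Player II has a winning strategy in the game `G₁(𝒜, 𝒞)` (of length `ω`):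
a function assigning to each finite sequence `(A₀, …, Aₙ)` of moves of player I an
element of `Aₙ`, such that in any play following it the chosen points form a member of `𝒞`. -/
def G1WinII {T : Type*} (𝒜 𝒞 : Set (Set T)) : Prop :=
  ∃ σ : (n : ℕ) → (Fin (n + 1) → Set T) → T,
    (∀ (n : ℕ) (h : Fin (n + 1) → Set T), (∀ i, h i ∈ 𝒜) → σ n h ∈ h (Fin.last n)) ∧
    ∀ A : ℕ → Set T, (∀ n, A n ∈ 𝒜) →
      (Set.range fun n => σ n fun i => A i.1) ∈ 𝒞

/-- Player II has a winning strategy in the transfinite game `G₁^α(𝒜, 𝒞)` of length `α`. -/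
def G1WinIIOrd {T : Type*} (α : Ordinal.{0}) (𝒜 𝒞 : Set (Set T)) : Prop :=
  ∃ σ : (γ : {γ : Ordinal.{0} // γ < α}) → ({δ : Ordinal.{0} // δ ≤ γ.1} → Set T) → T,
    (∀ (γ : {γ : Ordinal.{0} // γ < α}) (h : {δ : Ordinal.{0} // δ ≤ γ.1} → Set T),
      (∀ δ, h δ ∈ 𝒜) → σ γ h ∈ h ⟨γ.1, le_rfl⟩) ∧
    ∀ A : {γ : Ordinal.{0} // γ < α} → Set T, (∀ γ, A γ ∈ 𝒜) →
      (Set.range fun γ : {γ : Ordinal.{0} // γ < α} =>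
        σ γ fun δ => A ⟨δ.1, lt_of_le_of_lt δ.2 γ.2⟩) ∈ 𝒞

/-- The selection principle `S₁(𝒜, 𝒞)`. -/
def S1 {T : Type*} (𝒜 𝒞 : Set (Set T)) : Prop :=
  ∀ A : ℕ → Set T, (∀ n, A n ∈ 𝒜) →
    ∃ a : ℕ → T, (∀ n, a n ∈ A n) ∧ Set.range a ∈ 𝒞

/-- `Z` has countable tightness. -/
def CountablyTight (Z : Type*) [TopologicalSpace Z] : Prop :=
  ∀ (z : Z) (A : Set Z), z ∈ closure A → ∃ B ⊆ A, B.Countable ∧ z ∈ closure B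

/-- `Z` is productively countably tight: `Z × Y` has countable tightness
for every countably tight space `Y`. -/
def ProductivelyCountablyTight (Z : Type u) [TopologicalSpace Z] : Prop :=
  ∀ (Y : Type u) [TopologicalSpace Y], CountablyTight Y → CountablyTight (Z × Y)

/-- `Z` has tightness at most `κ`. -/
def TightnessLE (Z : Type u) [TopologicalSpace Z] (κ : Cardinal.{u}) : Prop :=
  ∀ (z : Z) (A : Set Z), z ∈ closure A → ∃ B ⊆ A, Cardinal.mk B ≤ κ ∧ z ∈ closure B

/-- `κ ∈ Sp(Z)`: for every space `Y` of tightness at most `κ`, the product `Z × Y`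
has tightness at most `κ`. -/
def MemSp (Z : Type u) [TopologicalSpace Z] (κ : Cardinal.{u}) : Prop :=
  ∀ (Y : Type u) [TopologicalSpace Y], TightnessLE Y κ → TightnessLE (Z × Y) κ

/-- `G` is a `G_κ`-set: an intersection of at most `κ` open sets. -/
def IsGKappaSet {X : Type u} [TopologicalSpace X] (κ : Cardinal.{u}) (G : Set X) : Prop :=
  ∃ 𝒪 : Set (Set X), (∀ O ∈ 𝒪, IsOpen O) ∧ Cardinal.mk 𝒪 ≤ κ ∧ G = ⋂₀ 𝒪

/-- `G` is a `G_δ`-set: an intersection of countably many open sets. -/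
def IsGDeltaSet {X : Type*} [TopologicalSpace X] (G : Set X) : Prop :=
  ∃ 𝒪 : Set (Set X), (∀ O ∈ 𝒪, IsOpen O) ∧ 𝒪.Countable ∧ G = ⋂₀ 𝒪

/-- A family `ℙ` of collections of subsets of `Z` is `κ`-singular at `z`. -/
def KappaSingularAt {Z : Type u} [TopologicalSpace Z] (κ : Cardinal.{u})
    (ℙ : Set (Set (Set Z))) (z : Z) : Prop :=
  (∀ ξ ∈ ℙ, ∀ A ∈ ξ, Cardinal.mk A ≤ κ) ∧
  (∀ ξ ∈ ℙ, ∀ F : Finset (Set Z), ↑F ⊆ ξ → (⋂₀ (F : Set (Set Z))).Nonempty) ∧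
  (∀ O : Set Z, IsOpen O → z ∈ O → ∃ ξ ∈ ℙ, ∃ A ∈ ξ, A ⊆ O) ∧
  (∀ ℰ ⊆ ℙ, Cardinal.mk ℰ ≤ κ → ∃ c : Set (Set Z) → Set Z,
    (∀ ξ ∈ ℰ, c ξ ∈ ξ) ∧ z ∉ closure (⋃ ξ ∈ ℰ, c ξ))

/-- `X` is an Alster space. -/
def Alster (X : Type*) [TopologicalSpace X] : Prop :=
  ∀ 𝒢 : Set (Set X), (∀ G ∈ 𝒢, IsGDeltaSet G) → IsKCover 𝒢 →
    ∃ 𝒢' ⊆ 𝒢, 𝒢'.Countable ∧ ⋃₀ 𝒢' = Set.univ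

/-- `X` is strongly Alster. -/
def StronglyAlster (X : Type*) [TopologicalSpace X] : Prop :=
  ∀ 𝒢 : Set (Set X), (∀ G ∈ 𝒢, IsGDeltaSet G) → IsKCover 𝒢 →
    ∃ 𝒢' ⊆ 𝒢, 𝒢'.Countable ∧ IsKCover 𝒢'

/-- `X` is productively Lindelöf. -/
def ProductivelyLindelof (X : Type u) [TopologicalSpace X] : Prop :=
  ∀ (Y : Type u) [TopologicalSpace Y], LindelofSpace Y → LindelofSpace (X × Y)

/-- `X` is hemicompact. -/
def Hemicompact (X : Type*) [TopologicalSpace X] : Prop :=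
  ∃ K : ℕ → Set X, (∀ n, IsCompact (K n)) ∧ ∀ C : Set X, IsCompact C → ∃ n, C ⊆ K n

/-!
Fix `f ∈ C_𝔅(X)`. A function `g` is `ε`-close to `f` on `B` exactly when `B` is contained in the
open set `approxSet f ε g = {|f - g| < ε}`, so `f ∈ closure A` means that these sets, with
`g ∈ A`, form a `𝔅`-cover for every `ε > 0`. Hence selecting from covers selects functions for one
`ε` at a time, and splitting the given sequence of sets into infinitely many subsequences handles
all `ε = 1 / (m + 1)` at once. Conversely, an open `𝔅`-cover `𝒰` is replaced by the set of
all `g ≠ f` with `approxSet f 1 g` contained in a member of `𝒰`; since compact sets can be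
separated from closed sets by continuous functions, `f` lies in its closure.
-/

section SelectionPrinciple

variable {T T' : Type*}

theorem S1.of_rel {𝒜 𝒞 : Set (Set T)} {𝒜' 𝒞' : Set (Set T')} (h : S1 𝒜 𝒞) (r : T → T' → Prop)
    (hdom : ∀ A' ∈ 𝒜', {t | ∃ t' ∈ A', r t t'} ∈ 𝒜)
    (hcod : ∀ (a : ℕ → T) (a' : ℕ → T'), (∀ n, r (a n) (a' n)) → range a ∈ 𝒞 → range a' ∈ 𝒞') :
    S1 𝒜' 𝒞' := by
  intro A' hA'
  obtain ⟨a, ha, ha𝒞⟩ := h (fun n => {t | ∃ t' ∈ A' n, r t t'}) fun n => hdom _ (hA' n)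
  choose a' ha' hr using ha
  exact ⟨a', ha', hcod a a' hr ha𝒞⟩

theorem s1_powerset_inter_iff {P : Set T} {𝒜 𝒞 : Set (Set T)} :
    S1 (𝒫 P ∩ 𝒜) (𝒫 P ∩ 𝒞) ↔ S1 (𝒫 P ∩ 𝒜) 𝒞 := by
  refine forall₂_congr fun A hA => exists_congr fun a => and_congr_right fun ha => ?_
  exact and_iff_right (range_subset_iff.2 fun n => (hA n).1 (ha n))

theorem S1.iInter {𝒜 : Set (Set T)} {𝒞 : ℕ → Set (Set T)} (h : ∀ m, S1 𝒜 (𝒞 m))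
    (hup : ∀ m, IsUpperSet (𝒞 m)) : S1 𝒜 (⋂ m, 𝒞 m) := by
  intro A hA
  choose a haA ha𝒞 using fun m => h m (fun n => A (Nat.pair m n)) fun n => hA _
  refine ⟨fun k => a k.unpair.1 k.unpair.2, fun k => ?_, mem_iInter.2 fun m => ?_⟩
  · simpa only [Nat.pair_unpair] using haA k.unpair.1 k.unpair.2
  · refine hup m (range_subset_iff.2 fun n => ?_) (ha𝒞 m)
    exact ⟨Nat.pair m n, by simp only [Nat.unpair_pair]⟩

end SelectionPrinciple

section Cover

variable {X : Type*} {𝔅 : Set (Set X)}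

theorem IsBCover.of_forall_exists_subset {𝒢 ℋ : Set (Set X)} (h𝒢 : IsBCover 𝔅 𝒢)
    (h : ∀ G ∈ 𝒢, ∃ H ∈ ℋ, G ⊆ H) : IsBCover 𝔅 ℋ := by
  intro B hB
  obtain ⟨G, hG, hBG⟩ := h𝒢 B hB
  obtain ⟨H, hH, hGH⟩ := h G hG
  exact ⟨H, hH, hBG.trans hGH⟩

theorem IsBCover.mono {𝒢 ℋ : Set (Set X)} (h𝒢 : IsBCover 𝔅 𝒢) (h : 𝒢 ⊆ ℋ) : IsBCover 𝔅 ℋ :=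
  h𝒢.of_forall_exists_subset fun G hG => ⟨G, h hG, Subset.rfl⟩

theorem IsBCover.nonempty {𝒢 : Set (Set X)} (h𝒢 : IsBCover 𝔅 𝒢) (h𝔅 : 𝔅.Nonempty) :
    𝒢.Nonempty := by
  obtain ⟨B, hB⟩ := h𝔅
  obtain ⟨G, hG, -⟩ := h𝒢 B hB
  exact ⟨G, hG⟩

theorem s1_openBCovers_iff [TopologicalSpace X] :
    S1 (OpenBCovers 𝔅) (OpenBCovers 𝔅) ↔ S1 (OpenBCovers 𝔅) {𝒰 | IsBCover 𝔅 𝒰} :=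
  s1_powerset_inter_iff (P := {U | IsOpen U})

theorem s1_openBCovers_of_isEmpty [TopologicalSpace X] [IsEmpty X] (h𝔅 : 𝔅.Nonempty) :
    S1 (OpenBCovers 𝔅) (OpenBCovers 𝔅) := by
  rw [s1_openBCovers_iff]
  intro 𝒰 h𝒰
  choose V hV using fun n => (h𝒰 n).2.nonempty h𝔅
  exact ⟨V, hV, fun _ _ => ⟨V 0, mem_range_self 0, fun x => isEmptyElim x⟩⟩

end Cover

theorem s1_omegaAt_iff {Z : Type*} [TopologicalSpace Z] {z : Z} :
    S1 (OmegaAt z) (OmegaAt z) ↔ S1 (OmegaAt z) {A | z ∈ closure A} :=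
  s1_powerset_inter_iff (P := {z}ᶜ)

theorem exists_continuousMap_eqOn_zero_eqOn_one {X : Type*} [TopologicalSpace X]
    [CompletelyRegularSpace X] {K U : Set X} (hK : IsCompact K) (hU : IsOpen U) (hKU : K ⊆ U) :
    ∃ φ : C(X, ℝ), EqOn φ 0 K ∧ EqOn φ 1 Uᶜ := by
  obtain ⟨V, hV, rfl⟩ := (isInducing_stoneCechUnit (X := X)).isOpen_iff.1 hU
  have hdisj : Disjoint (stoneCechUnit '' K) Vᶜ :=
    disjoint_compl_right_iff_subset.2 (image_subset_iff.2 hKU)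
  obtain ⟨ψ, hψ₀, hψ₁, -⟩ := exists_continuous_zero_one_of_isClosed
    (hK.image continuous_stoneCechUnit).isClosed hV.isClosed_compl hdisj
  exact ⟨ψ.comp ⟨stoneCechUnit, continuous_stoneCechUnit⟩,
    fun x hx => hψ₀ (mem_image_of_mem _ hx), fun x hx => hψ₁ hx⟩

section FunctionSpace

variable {X : Type u} [TopologicalSpace X]

/-- The set of points at which `g` is `ε`-close to `f`. Membership of `g` in the basic ball
`⟨B, ε⟩[f]` is the inclusion `B ⊆ approxSet f ε g`, which translates closures in `C_𝔅(X)` into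
`𝔅`-covers. -/
def approxSet (f : CFn X) (ε : ℝ) (g : CFn X) : Set X :=
  {x | |f.1 x - g.1 x| < ε}

theorem isOpen_approxSet (f : CFn X) (ε : ℝ) (g : CFn X) : IsOpen (approxSet f ε g) :=
  isOpen_lt (f.2.sub g.2).abs continuous_const

theorem approxSet_mono (f g : CFn X) {δ ε : ℝ} (h : δ ≤ ε) : approxSet f δ g ⊆ approxSet f ε g :=
  fun _ hx => lt_of_lt_of_le hx h

theorem mem_unifBall_iff_subset_approxSet {f g : CFn X} {B : Set X} {ε : ℝ} :
    g ∈ unifBall f B ε ↔ B ⊆ approxSet f ε g :=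
  Iff.rfl

theorem exists_ne_subset_approxSet_approxSet_one_subset [CompletelyRegularSpace X] [Nonempty X]
    (f : CFn X) {K U : Set X} (hK : IsCompact K) (hU : IsOpen U) (hKU : K ⊆ U) {ε : ℝ}
    (hε : 0 < ε) : ∃ g, g ≠ f ∧ K ⊆ approxSet f ε g ∧ approxSet f 1 g ⊆ U := by
  obtain ⟨φ, hφ₀, hφ₁⟩ := exists_continuousMap_eqOn_zero_eqOn_one hK hU hKU
  -- The lower bound `ε / 2` keeps `g` away from `f` even if `U` is the whole space.
  let g : CFn X := ⟨fun x => f.1 x + max (φ x) (ε / 2), f.2.add (φ.continuous.max continuous_const)⟩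
  have hpos (x : X) : 0 < max (φ x) (ε / 2) := lt_max_of_lt_right (half_pos hε)
  have habs (x : X) : |f.1 x - g.1 x| = max (φ x) (ε / 2) := by
    rw [abs_sub_comm, add_sub_cancel_left, abs_of_pos (hpos x)]
  refine ⟨g, fun hgf => ?_, fun x hx => ?_, fun x hx => ?_⟩
  · obtain ⟨x⟩ := ‹Nonempty X›
    exact (hpos x).ne' (by rw [← habs, hgf, sub_self, abs_zero])
  · refine (habs x).trans_lt (max_lt ?_ (half_lt_self hε))
    simpa only [hφ₀ hx, Pi.zero_apply] using hε
  · by_contra hxU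
    have hlt : max (φ x) (ε / 2) < 1 := (habs x).symm.trans_lt hx
    exact (lt_of_le_of_lt (le_max_left _ _) hlt).ne (hφ₁ hxU)

variable {𝔅 : Set (Set X)} (hB : IsBornology 𝔅)

theorem unifBall_mem_nhds (f : CFn X) {B : Set X} (hB𝔅 : B ∈ 𝔅) {ε : ℝ} (hε : 0 < ε) :
    unifBall f B ε ∈ @nhds _ (bornTopology 𝔅 hB) f := by
  let := bornTopology 𝔅 hB
  -- `unifBall f B ε` itself need not be open: `|f - g|` may have supremum `ε` on `B`.
  let V : Set (CFn X) := {g | ∃ δ < ε, ∀ x ∈ B, |f.1 x - g.1 x| ≤ δ}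
  have hV : IsOpen V := by
    rintro g ⟨δ, hδ, hg⟩
    refine ⟨B, hB𝔅, (ε - δ) / 2, half_pos (sub_pos.2 hδ), fun k hk => ?_⟩
    refine ⟨δ + (ε - δ) / 2, by linarith, fun x hx => ?_⟩
    exact (abs_sub_le _ (g.1 x) _).trans (add_le_add (hg x hx) (hk x hx).le)
  have hfV : f ∈ V := ⟨0, hε, fun x _ => by rw [sub_self, abs_zero]⟩
  refine Filter.mem_of_superset (hV.mem_nhds hfV) ?_
  rintro g ⟨δ, hδ, hg⟩ x hx
  exact (hg x hx).trans_lt hδ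

theorem hasBasis_nhds_unifBall (f : CFn X) :
    (@nhds _ (bornTopology 𝔅 hB) f).HasBasis (fun p : Set X × ℝ => p.1 ∈ 𝔅 ∧ 0 < p.2)
      fun p => unifBall f p.1 p.2 := by
  let := bornTopology 𝔅 hB
  refine ⟨fun s => ⟨fun hs => ?_, ?_⟩⟩
  · obtain ⟨U, hUs, hU, hfU⟩ := mem_nhds_iff.1 hs
    obtain ⟨B, hB𝔅, ε, hε, hBU⟩ := hU f hfU
    exact ⟨(B, ε), ⟨hB𝔅, hε⟩, hBU.trans hUs⟩
  · rintro ⟨⟨B, ε⟩, ⟨hB𝔅, hε⟩, hs⟩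
    exact Filter.mem_of_superset (unifBall_mem_nhds hB f hB𝔅 hε) hs

theorem mem_closure_iff_isBCover_approxSet {f : CFn X} {A : Set (CFn X)} :
    f ∈ closure[bornTopology 𝔅 hB] A ↔ ∀ ε > 0, IsBCover 𝔅 (approxSet f ε '' A) := by
  let := bornTopology 𝔅 hB
  simp only [mem_closure_iff_nhds_basis (hasBasis_nhds_unifBall hB f), Prod.forall, and_imp,
    IsBCover, exists_mem_image, mem_unifBall_iff_subset_approxSet]
  exact ⟨fun h ε hε B hB𝔅 => h B ε hB𝔅 hε, fun h B ε hB𝔅 hε => h ε hε B hB𝔅⟩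

theorem setOf_mem_closure_eq_iInter (f : CFn X) :
    {A | f ∈ closure[bornTopology 𝔅 hB] A} =
      ⋂ m : ℕ, {A | IsBCover 𝔅 (approxSet f (1 / (m + 1)) '' A)} := by
  ext A
  simp only [mem_ofPred_eq, mem_iInter, mem_closure_iff_isBCover_approxSet]
  refine ⟨fun h m => h _ Nat.one_div_pos_of_nat, fun h ε hε => ?_⟩
  obtain ⟨m, hm⟩ := exists_nat_one_div_lt hε
  refine (h m).of_forall_exists_subset (forall_mem_image.2 fun g hg => ?_)
  exact ⟨_, mem_image_of_mem _ hg, approxSet_mono f g hm.le⟩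

theorem mem_closure_setOf_approxSet_one_subset [CompletelyRegularSpace X] [Nonempty X]
    (hcb : HasCompactBase 𝔅) (f : CFn X) {𝒰 : Set (Set X)} (h𝒰 : 𝒰 ∈ OpenBCovers 𝔅) :
    f ∈ closure[bornTopology 𝔅 hB] {g | ∃ U ∈ 𝒰, g ≠ f ∧ approxSet f 1 g ⊆ U} := by
  refine (mem_closure_iff_isBCover_approxSet hB).2 fun ε hε B hB𝔅 => ?_
  obtain ⟨K, hK𝔅, hK, hBK⟩ := hcb B hB𝔅
  obtain ⟨U, hU, hKU⟩ := h𝒰.2 K hK𝔅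
  obtain ⟨g, hgf, hKg, hgU⟩ :=
    exists_ne_subset_approxSet_approxSet_one_subset f hK (h𝒰.1 U hU) hKU hε
  exact ⟨_, mem_image_of_mem _ ⟨U, hU, hgf, hgU⟩, hBK.trans hKg⟩

theorem s1_openBCovers_of_s1_omegaAt [CompletelyRegularSpace X] (hcb : HasCompactBase 𝔅)
    (f : CFn X) (h : S1 (@OmegaAt _ (bornTopology 𝔅 hB) f) (@OmegaAt _ (bornTopology 𝔅 hB) f)) :
    S1 (OpenBCovers 𝔅) (OpenBCovers 𝔅) := by
  cases isEmpty_or_nonempty X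
  · exact s1_openBCovers_of_isEmpty ⟨∅, hB.empty_mem⟩
  rw [s1_openBCovers_iff]
  refine h.of_rel (fun g U => g ≠ f ∧ approxSet f 1 g ⊆ U) (fun 𝒰 h𝒰 => ⟨?_, ?_⟩) ?_
  · rintro g ⟨U, -, hgf, -⟩
    exact hgf
  · exact mem_closure_setOf_approxSet_one_subset hB hcb f h𝒰
  · intro g U hgU hg
    have hcover := (mem_closure_iff_isBCover_approxSet hB).1 hg.2 1 one_pos
    refine hcover.of_forall_exists_subset (forall_mem_image.2 (forall_mem_range.2 fun n => ?_))
    exact ⟨U n, mem_range_self n, (hgU n).2⟩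

theorem S1.omegaAt_isBCover_image_approxSet (h : S1 (OpenBCovers 𝔅) (OpenBCovers 𝔅)) (f : CFn X)
    {ε : ℝ} (hε : 0 < ε) :
    S1 (@OmegaAt _ (bornTopology 𝔅 hB) f) {A | IsBCover 𝔅 (approxSet f ε '' A)} := by
  refine h.of_rel (fun U g => approxSet f ε g = U) (fun A hA => ⟨?_, ?_⟩) ?_
  · rintro _ ⟨g, -, rfl⟩
    exact isOpen_approxSet f ε g
  · exact (mem_closure_iff_isBCover_approxSet hB).1 hA.2 ε hε
  · intro U g hgU hU
    obtain rfl : approxSet f ε ∘ g = U := funext hgU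
    simpa only [mem_ofPred_eq, range_comp] using hU.2

theorem s1_omegaAt_of_s1_openBCovers (f : CFn X) (h : S1 (OpenBCovers 𝔅) (OpenBCovers 𝔅)) :
    S1 (@OmegaAt _ (bornTopology 𝔅 hB) f) (@OmegaAt _ (bornTopology 𝔅 hB) f) := by
  rw [@s1_omegaAt_iff _ (bornTopology 𝔅 hB), setOf_mem_closure_eq_iInter]
  exact S1.iInter (fun m => h.omegaAt_isBCover_image_approxSet hB f Nat.one_div_pos_of_nat)
    fun m A A' hAA' hA => hA.mono (image_mono hAA')

end FunctionSpace

theorem stmt19_general {X : Type u} [TopologicalSpace X] [CompletelyRegularSpace X]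
    {𝔅 : Set (Set X)} (hB : IsBornology 𝔅) (hcb : HasCompactBase 𝔅) (f : CFn X) :
    S1 (@OmegaAt (CFn X) (bornTopology 𝔅 hB) f) (@OmegaAt (CFn X) (bornTopology 𝔅 hB) f) ↔
      S1 (OpenBCovers 𝔅) (OpenBCovers 𝔅) :=
  ⟨s1_openBCovers_of_s1_omegaAt hB hcb f, s1_omegaAt_of_s1_openBCovers hB f⟩

/-- `C_𝔅(X)` satisfies `S₁(Ω_{0̄}, Ω_{0̄})` iff `X` satisfies
`S₁(𝒪_𝔅, 𝒪_𝔅)`. -/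
theorem stmt19 {X : Type u} [TopologicalSpace X] [T35Space X]
    (𝔅 : Set (Set X)) (hB : IsBornology 𝔅) (hcb : HasCompactBase 𝔅) :
    S1 (@OmegaAt (CFn X) (bornTopology 𝔅 hB) (zeroFn X))
        (@OmegaAt (CFn X) (bornTopology 𝔅 hB) (zeroFn X)) ↔
      S1 (OpenBCovers 𝔅) (OpenBCovers 𝔅) :=
  stmt19_general hB hcb (zeroFn X)
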